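/- Let S be a conditionally completely regular semigroup and let s, t ∈ S. Then for every x ∈ S: there exists a weak inverse of s*t that is 𝒟-related to x if and only if (there exists a weak inverse of s that is 𝒟-related to x) and (there exists a weak inverse of t that is 𝒟-related to x). -/

import Mathlib

/-- Green's relation ℒ: `s ℒ t` iff `{s} ∪ Ss = {t} ∪ St`. -/
def LRel {S : Type*} [Semigroup S] (s t : S) : Prop :=
  ({s} ∪ {x | ∃ a : S, x = a * s} : Set S) = ({t} ∪ {x | ∃ a : S, x = a * t} : Set S)

/-- Green's relation ℛ: `s ℛ t` iff `{s} ∪ sS = {t} ∪ tS`. -/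
def RRel {S : Type*} [Semigroup S] (s t : S) : Prop :=
  ({s} ∪ {x | ∃ a : S, x = s * a} : Set S) = ({t} ∪ {x | ∃ a : S, x = t * a} : Set S)

/-- Green's relation ℋ = ℒ ∩ ℛ. -/
def HRel {S : Type*} [Semigroup S] (s t : S) : Prop := LRel s t ∧ RRel s t

/-- Green's relation 𝒟: `s 𝒟 t` iff `∃ u, s ℒ u` and `u ℛ t`. -/
def DRel {S : Type*} [Semigroup S] (s t : S) : Prop := ∃ u : S, LRel s u ∧ RRel u t

/-- An element `s` is regular if `s = s * x * s` for some `x`. -/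
def IsRegularElem {S : Type*} [Semigroup S] (s : S) : Prop := ∃ x : S, s = s * x * s

/-- `S` is conditionally completely regular if every regular element is
ℋ-related to an idempotent. -/
def CondCompletelyRegular (S : Type*) [Semigroup S] : Prop :=
  ∀ s : S, IsRegularElem s → ∃ e : S, e * e = e ∧ HRel s e

/-!
A weak inverse `z` of `s * t` yields `t * z ∈ W(s)` and `z * s ∈ W(t)`, with `t * z ℒ z ℛ z * s`.
Conversely, let `z₁ ∈ W(s)` and `z₂ ∈ W(t)` lie in a 𝒟-class `D`; then so do `z₁ * s` and
`t * z₂`. If `D` is closed under multiplication, `(z₁ * s) * (t * z₂)` is a regular element of `D`,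
so it has a weak inverse `w ∈ D`, and `z₂ * (w * z₁) ∈ D` is a weak inverse of `s * t`.

In a conditionally completely regular semigroup every regular 𝒟-class is closed under
multiplication: if `a ℒ u ℛ b` and `u` is ℋ-related to an idempotent `e`, then
`a * b ℒ e * b = b`.
-/

/-- `z` is a weak inverse of `s`, written `z ∈ W(s)`. -/
def IsWeakInverse {S : Type*} [Semigroup S] (z s : S) : Prop := z = z * s * z

section WeakInverses

open MulOpposite

variable {S : Type*} [Semigroup S] {a b c e s t w x z : S}

theorem principalLeftIdeal_subset_iff :
    ({a} ∪ {x | ∃ p : S, x = p * a} : Set S) ⊆ {b} ∪ {x | ∃ p : S, x = p * b} ↔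
      a = b ∨ ∃ p, a = p * b := by
  constructor
  · exact fun h ↦ h (.inl rfl)
  · rintro (rfl | ⟨p, rfl⟩)
    · rfl
    · rintro _ (rfl | ⟨q, rfl⟩)
      · exact .inr ⟨p, rfl⟩
      · exact .inr ⟨q * p, (mul_assoc q p b).symm⟩

theorem lRel_iff : LRel a b ↔ a = b ∨ (∃ p, a = p * b) ∧ ∃ q, b = q * a := by
  rw [LRel, Set.Subset.antisymm_iff, principalLeftIdeal_subset_iff, principalLeftIdeal_subset_iff,
    eq_comm (a := b), or_and_left]

theorem rRel_iff_lRel_op : RRel a b ↔ LRel (op a) (op b) := by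
  simp only [RRel, LRel, Set.ext_iff, Set.mem_union, Set.mem_singleton_iff, Set.mem_ofPred_eq,
    op_surjective.forall, op_surjective.exists, ← op_mul, op_inj]

theorem rRel_iff : RRel a b ↔ a = b ∨ (∃ p, a = b * p) ∧ ∃ q, b = a * q := by
  simp only [rRel_iff_lRel_op, lRel_iff, op_surjective.exists, ← op_mul, op_inj]

namespace LRel

theorem of_mul {p q : S} (ha : a = p * b) (hb : b = q * a) : LRel a b :=
  lRel_iff.2 (.inr ⟨⟨p, ha⟩, q, hb⟩)

protected theorem symm (h : LRel a b) : LRel b a := Eq.symm h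

protected theorem trans (hab : LRel a b) (hbc : LRel b c) : LRel a c := Eq.trans hab hbc

theorem mul_right (h : LRel a b) (c : S) : LRel (a * c) (b * c) := by
  obtain rfl | ⟨⟨p, hp⟩, q, hq⟩ := lRel_iff.1 h
  · rfl
  · exact .of_mul (p := p) (q := q) (by rw [← mul_assoc, ← hp]) (by rw [← mul_assoc, ← hq])

theorem dRel (h : LRel a b) : DRel a b := ⟨b, h, rfl⟩

end LRel

namespace RRel

theorem of_mul {p q : S} (ha : a = b * p) (hb : b = a * q) : RRel a b :=
  rRel_iff.2 (.inr ⟨⟨p, ha⟩, q, hb⟩)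

protected theorem symm (h : RRel a b) : RRel b a := Eq.symm h

protected theorem trans (hab : RRel a b) (hbc : RRel b c) : RRel a c := Eq.trans hab hbc

theorem mul_left (h : RRel a b) (c : S) : RRel (c * a) (c * b) :=
  rRel_iff_lRel_op.2 ((rRel_iff_lRel_op.1 h).mul_right (op c))

theorem dRel (h : RRel a b) : DRel a b := ⟨a, rfl, h⟩

theorem dRel_of_lRel (hab : RRel a b) (hbc : LRel b c) : DRel a c := by
  obtain rfl | ⟨-, r, hc⟩ := lRel_iff.1 hbc
  · exact hab.dRel
  obtain rfl | ⟨⟨q, ha⟩, -⟩ := rRel_iff.1 hab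
  · exact hbc.dRel
  have hcq : r * a = c * q := by rw [ha, hc, mul_assoc]
  have hl : LRel a (r * a) := by
    rw [hcq, ha]
    exact hbc.mul_right q
  have hr : RRel (r * a) c := by
    rw [hc]
    exact hab.mul_left r
  exact ⟨r * a, hl, hr⟩

theorem isIdempotentElem_mul_eq (h : RRel e b) (he : IsIdempotentElem e) : e * b = b := by
  obtain rfl | ⟨-, p, rfl⟩ := rRel_iff.1 h
  · exact he
  · rw [← mul_assoc, he.eq]

end RRel

theorem LRel.mul_lRel_of_isIdempotentElem (hae : LRel a e) (heb : RRel e b)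
    (he : IsIdempotentElem e) : LRel (a * b) b := by
  simpa only [heb.isIdempotentElem_mul_eq he] using hae.mul_right b

namespace DRel

protected theorem symm (h : DRel a b) : DRel b a := by
  obtain ⟨u, hau, hub⟩ := h
  exact hub.symm.dRel_of_lRel hau.symm

protected theorem trans (hab : DRel a b) (hbc : DRel b c) : DRel a c := by
  obtain ⟨u, hau, hub⟩ := hab
  obtain ⟨v, hbv, hvc⟩ := hbc
  obtain ⟨w, huw, hwv⟩ := hub.dRel_of_lRel hbv
  exact ⟨w, hau.trans huw, hwv.trans hvc⟩

end DRel

namespace IsWeakInverse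

theorem isRegularElem (h : IsWeakInverse z s) : IsRegularElem z := ⟨s, h⟩

theorem rRel_mul (h : IsWeakInverse z s) : RRel (z * s) z := .of_mul rfl h

theorem mul_lRel (h : IsWeakInverse z s) : LRel (s * z) z :=
  .of_mul rfl (h.trans (mul_assoc z s z))

theorem dRel (hw : IsWeakInverse w a) (ha : IsWeakInverse a w) : DRel w a :=
  ⟨a * w, hw.mul_lRel.symm, ha.rRel_mul⟩

theorem mul_left (h : IsWeakInverse z (s * t)) : IsWeakInverse (t * z) s :=
  calc t * z = t * (z * (s * t) * z) := congrArg (t * ·) h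
    _ = t * z * s * (t * z) := by simp only [mul_assoc]

theorem mul_right (h : IsWeakInverse z (s * t)) : IsWeakInverse (z * s) t :=
  calc z * s = z * (s * t) * z * s := congrArg (· * s) h
    _ = z * s * t * (z * s) := by simp only [mul_assoc]

theorem lRel_mul_left (h : IsWeakInverse z (s * t)) : LRel (t * z) z :=
  .of_mul (q := z * s) rfl (h.trans (by simp only [mul_assoc]))

theorem rRel_mul_right (h : IsWeakInverse z (s * t)) : RRel (z * s) z :=
  .of_mul (q := t * z) rfl (h.trans (by simp only [mul_assoc]))

end IsWeakInverse

theorem isRegularElem_op : IsRegularElem (op a) ↔ IsRegularElem a := by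
  simp only [IsRegularElem, op_surjective.exists, ← op_mul, op_inj, mul_assoc]

namespace IsRegularElem

theorem of_lRel (ha : IsRegularElem a) (h : LRel a b) : IsRegularElem b := by
  obtain ⟨y, hy⟩ := ha
  obtain rfl | ⟨⟨q, hq⟩, p, hp⟩ := lRel_iff.1 h
  · exact ⟨y, hy⟩
  refine ⟨y * q, ?_⟩
  calc b = p * (a * y * a) := by rw [← hy, hp]
    _ = p * a * y * a := by simp only [mul_assoc]
    _ = b * y * (q * b) := by rw [← hp, ← hq]
    _ = b * (y * q) * b := by simp only [mul_assoc]

theorem of_rRel (ha : IsRegularElem a) (h : RRel a b) : IsRegularElem b :=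
  isRegularElem_op.1 ((isRegularElem_op.2 ha).of_lRel (rRel_iff_lRel_op.1 h))

theorem of_dRel (ha : IsRegularElem a) (h : DRel a b) : IsRegularElem b := by
  obtain ⟨u, hau, hub⟩ := h
  exact (ha.of_lRel hau).of_rRel hub

theorem exists_isWeakInverse_isWeakInverse (ha : IsRegularElem a) :
    ∃ w, IsWeakInverse w a ∧ IsWeakInverse a w := by
  obtain ⟨y, hy⟩ := ha
  have hya : y * a = y * a * (y * a) := by
    rw [mul_assoc, ← mul_assoc a, ← hy]
  refine ⟨y * a * y, ?_, ?_⟩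
  · calc y * a * y = y * a * (y * a) * (y * a) * y := by rw [← hya, ← hya]
      _ = y * a * y * a * (y * a * y) := by simp only [mul_assoc]
  · calc a = a * y * (a * y * a) := by rw [← hy, ← hy]
      _ = a * (y * a * y) * a := by simp only [mul_assoc]

theorem exists_isWeakInverse_dRel (ha : IsRegularElem a) : ∃ w, IsWeakInverse w a ∧ DRel w a := by
  obtain ⟨w, hwa, haw⟩ := ha.exists_isWeakInverse_isWeakInverse
  exact ⟨w, hwa, hwa.dRel haw⟩

end IsRegularElem

theorem CondCompletelyRegular.mul_dRel (hS : CondCompletelyRegular S) (hx : IsRegularElem x)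
    (ha : DRel a x) (hb : DRel b x) : DRel (a * b) x := by
  obtain ⟨u, hau, hub⟩ := ha.trans hb.symm
  have hu : IsRegularElem u := (hx.of_dRel ha.symm).of_lRel hau
  obtain ⟨e, he, hue_l, hue_r⟩ := hS u hu
  have hab : LRel (a * b) b :=
    (hau.trans hue_l).mul_lRel_of_isIdempotentElem (hue_r.symm.trans hub) he
  exact hab.dRel.trans hb

theorem IsWeakInverse.exists_isWeakInverse_mul_dRel {z₁ z₂ : S}
    (hx : ∀ a b : S, DRel a x → DRel b x → DRel (a * b) x)
    (h₁ : IsWeakInverse z₁ s) (h₁x : DRel z₁ x) (h₂ : IsWeakInverse z₂ t) (h₂x : DRel z₂ x) :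
    ∃ z, IsWeakInverse z (s * t) ∧ DRel z x := by
  have hp : DRel (z₁ * s * (t * z₂)) x :=
    hx _ _ (h₁.rRel_mul.dRel.trans h₁x) (h₂.mul_lRel.dRel.trans h₂x)
  have hp_reg : IsRegularElem (z₁ * s * (t * z₂)) :=
    h₁.isRegularElem.of_dRel (h₁x.trans hp.symm)
  obtain ⟨w, hw, hwp⟩ := hp_reg.exists_isWeakInverse_dRel
  have hw' : IsWeakInverse w (z₁ * (s * t * z₂)) := by simpa only [mul_assoc] using hw
  exact ⟨z₂ * (w * z₁), hw'.mul_right.mul_left, hx _ _ h₂x (hx _ _ (hwp.trans hp) h₁x)⟩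

end WeakInverses

theorem stmt13_general {S : Type*} [Semigroup S] {x : S}
    (hx : IsRegularElem x → ∀ a b : S, DRel a x → DRel b x → DRel (a * b) x) (s t : S) :
    (∃ z : S, z = z * (s * t) * z ∧ DRel z x) ↔
      ((∃ z : S, z = z * s * z ∧ DRel z x) ∧ (∃ z : S, z = z * t * z ∧ DRel z x)) := by
  constructor
  · rintro ⟨z, hz : IsWeakInverse z (s * t), hzx⟩
    exact ⟨⟨t * z, hz.mul_left, hz.lRel_mul_left.dRel.trans hzx⟩,
      ⟨z * s, hz.mul_right, hz.rRel_mul_right.dRel.trans hzx⟩⟩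
  · rintro ⟨⟨z₁, h₁ : IsWeakInverse z₁ s, h₁x⟩, z₂, h₂ : IsWeakInverse z₂ t, h₂x⟩
    exact h₁.exists_isWeakInverse_mul_dRel (hx (h₁.isRegularElem.of_dRel h₁x)) h₁x h₂ h₂x

/-- In a conditionally completely regular semigroup, for any 𝒟-class (here
represented by an element `x`), `W(s*t)` meets the 𝒟-class of `x` iff both
`W(s)` and `W(t)` do. -/
theorem stmt13 {S : Type*} [Semigroup S] (hS : CondCompletelyRegular S)
    (s t : S) :
    ∀ x : S,
      (∃ z : S, z = z * (s * t) * z ∧ DRel z x) ↔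
        ((∃ z : S, z = z * s * z ∧ DRel z x) ∧ (∃ z : S, z = z * t * z ∧ DRel z x)) :=
  fun _ ↦ stmt13_general (fun hx _ _ ha hb ↦ hS.mul_dRel hx ha hb) s t
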